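/- arXiv:2311.03693 — 4 statements merged into one kernel-verified Lean document; each statement's English description precedes it below -/
import Mathlib

section
/- For every finite homogeneous system of linear equations with integer coefficients in n variables (in particular, for the matching equations of normal curve/surface theory, whose equations all have the form v_i + v_j = v_k + v_l), there exist finitely many solutions F_1, …, F_k ∈ ℕ^n such that every solution w ∈ ℕ^n is a linear combination w = n_1·F_1 + … + n_k·F_k with coefficients n_1, …, n_k ∈ ℕ. Equivalently, the set of solutions is a finitely generated additive submonoid of ℕ^n. -/
/-- A vector `v ∈ ℕ^n` is a solution of the homogeneous integer linear system
given by the `m × n` integer matrix `A` if `A · v = 0` (viewing `v` inside `ℤ^n`). -/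
def IsSolution {m n : ℕ} (A : Matrix (Fin m) (Fin n) ℤ) (v : Fin n → ℕ) : Prop :=
  A.mulVec (fun i => (v i : ℤ)) = 0

/-- Hilbert basis theorem for homogeneous integer linear systems: there are finitely
many fundamental solutions `F₁, …, F_k ∈ ℕ^n` such that every solution `w ∈ ℕ^n`
is an ℕ-linear combination `w = n₁ • F₁ + ⋯ + n_k • F_k`. -/
theorem hilbert_basis_for_matching_equations {m n : ℕ} (A : Matrix (Fin m) (Fin n) ℤ) :
    ∃ (k : ℕ) (F : Fin k → (Fin n → ℕ)),
      (∀ i, IsSolution A (F i)) ∧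
      ∀ w : Fin n → ℕ, IsSolution A w →
        ∃ c : Fin k → ℕ, w = ∑ i, c i • F i := by
  let f : (Fin n → ℕ) →+ (Fin m → ℤ) :=
    { toFun := fun v => A.mulVec (fun i => (v i : ℤ))
      map_zero' := by
        have h : (fun i : Fin n => (((0 : Fin n → ℕ) i : ℕ) : ℤ)) = 0 := by
          funext i; simp
        rw [h, Matrix.mulVec_zero]
      map_add' := fun v w => by
        rw [← Matrix.mulVec_add]
        refine congrArg A.mulVec ?_
        funext i
        simp }
  obtain ⟨S, hS⟩ := AddSubmonoid.fg_eqLocusM f 0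
  have hmem : ∀ w, IsSolution A w ↔ w ∈ AddSubmonoid.closure (S : Set (Fin n → ℕ)) := by
    intro w
    rw [hS]
    exact Iff.rfl
  let e := S.equivFin
  refine ⟨S.card, fun i => (e.symm i : Fin n → ℕ), fun i => ?_, fun w hw => ?_⟩
  · exact (hmem _).2 (AddSubmonoid.subset_closure (e.symm i).2)
  · have h1 := (hmem w).1 hw
    have hr : Set.range (fun i => (e.symm i : Fin n → ℕ)) = (S : Set (Fin n → ℕ)) := by
      ext x
      constructor
      · rintro ⟨i, rfl⟩
        exact (e.symm i).2
      · intro hx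
        exact ⟨e ⟨x, hx⟩, by simp⟩
    have h2 : w ∈ Submodule.span ℕ (Set.range (fun i => (e.symm i : Fin n → ℕ))) := by
      rw [hr]
      have h3 : AddSubmonoid.closure (S : Set (Fin n → ℕ)) ≤
          (Submodule.span ℕ (S : Set (Fin n → ℕ))).toAddSubmonoid :=
        AddSubmonoid.closure_le.2 Submodule.subset_span
      exact h3 h1
    obtain ⟨c, hc⟩ := (Submodule.mem_span_range_iff_exists_fun ℕ).1 h2
    exact ⟨c, hc.symm⟩
end

section
/- For every m×n integer matrix A, the set of fundamental solutions of the system A·v = 0 — that is, nonzero solutions v ∈ ℕ^n that cannot be written as the sum of two nonzero solutions — is finite. -/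
/-- A solution is fundamental if it is nonzero and cannot be written as the sum of
two nonzero solutions. -/
def IsFundamental {m n : ℕ} (A : Matrix (Fin m) (Fin n) ℤ) (v : Fin n → ℕ) : Prop :=
  IsSolution A v ∧ v ≠ 0 ∧
    ¬ ∃ b c : Fin n → ℕ, IsSolution A b ∧ IsSolution A c ∧ b ≠ 0 ∧ c ≠ 0 ∧ v = b + c

/-- The set of fundamental solutions of a homogeneous integer linear system is finite. -/
theorem fundamental_solutions_finite {m n : ℕ} (A : Matrix (Fin m) (Fin n) ℤ) :
    {v : Fin n → ℕ | IsFundamental A v}.Finite := by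
  refine IsAntichain.finite_of_partiallyWellOrderedOn (r := (· ≤ ·)) ?_ (Set.isPWO_of_wellQuasiOrderedLE _)
  intro u hu v hv hne hle
  have hle' : u ≤ v := hle
  have hadd : v = u + (v - u) := (add_tsub_cancel_of_le hle').symm
  refine hv.2.2 ⟨u, v - u, hu.1, ?_, hu.2.1, ?_, hadd⟩
  · have h1 : A.mulVec (fun i => (u i : ℤ)) = 0 := hu.1
    have h2 : A.mulVec (fun i => (v i : ℤ)) = 0 := hv.1
    have h3 : (fun i => ((v - u) i : ℤ)) = (fun i => (v i : ℤ)) - (fun i => (u i : ℤ)) := by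
      funext i
      simp [Nat.cast_sub (hle' i)]
    unfold IsSolution
    rw [h3, Matrix.mulVec_sub, h1, h2, sub_zero]
  · intro h
    rw [h, add_zero] at hadd
    exact hne hadd.symm
end

section
/- For every m×n integer matrix A, every solution w ∈ ℕ^n of the system A·v = 0 can be written as a finite sum of fundamental solutions (equivalently, as an ℕ-linear combination of fundamental solutions). In particular, every normal curve or normal surface is a Haken sum of fundamental ones. -/
/-- Every solution of the system is a finite sum of fundamental solutions
(the Haken-sum decomposition into fundamental normal curves/surfaces). -/
theorem solution_eq_sum_of_fundamental {m n : ℕ} (A : Matrix (Fin m) (Fin n) ℤ)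
    (w : Fin n → ℕ) (hw : IsSolution A w) :
    ∃ (k : ℕ) (f : Fin k → (Fin n → ℕ)),
      (∀ i, IsFundamental A (f i)) ∧ w = ∑ i, f i := by
  induction hN : ∑ i, w i using Nat.strong_induction_on generalizing w with
  | _ N ih =>
    by_cases h0 : w = 0
    · exact ⟨0, fun i => i.elim0, fun i => i.elim0, by simpa using h0⟩
    by_cases hf : IsFundamental A w
    · exact ⟨1, fun _ => w, fun _ => hf, by simp⟩
    have hd : ∃ b c : Fin n → ℕ,
        IsSolution A b ∧ IsSolution A c ∧ b ≠ 0 ∧ c ≠ 0 ∧ w = b + c := by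
      by_contra h
      exact hf ⟨hw, h0, h⟩
    obtain ⟨b, c, hb, hc, hb0, hc0, rfl⟩ := hd
    have pos : ∀ v : Fin n → ℕ, v ≠ 0 → 0 < ∑ i, v i := by
      intro v hv
      obtain ⟨i, hi⟩ := Function.ne_iff.mp hv
      exact Finset.sum_pos' (fun _ _ => Nat.zero_le _)
        ⟨i, Finset.mem_univ i, Nat.pos_of_ne_zero hi⟩
    have h1 := pos b hb0
    have h2 := pos c hc0
    simp only [Pi.add_apply, Finset.sum_add_distrib] at hN
    obtain ⟨k, f, hf1, hf2⟩ := ih _ (by omega) b hb rfl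
    obtain ⟨l, g, hg1, hg2⟩ := ih _ (by omega) c hc rfl
    refine ⟨k + l, Fin.append f g, ?_, ?_⟩
    · intro i
      refine Fin.addCases (fun i => ?_) (fun i => ?_) i
      · rw [Fin.append_left]; exact hf1 i
      · rw [Fin.append_right]; exact hg1 i
    · rw [Fin.sum_univ_add]
      simp only [Fin.append_left, Fin.append_right]
      rw [← hf2, ← hg2]
end

section
/- Let v₀, v₁, v₂, v₃ ∈ ℝ³ be affinely independent points and let f, g : ℝ³ → ℝ be affine maps such that f(v₀) < 0, f(v₁) < 0, f(v₂) > 0, f(v₃) > 0, while g(v₀) < 0, g(v₂) < 0, g(v₁) > 0, g(v₃) > 0. Then there exists a point x in the convex hull of {v₀, v₁, v₂, v₃} with f(x) = 0 and g(x) = 0. In other words, two flat cross-sections of a tetrahedron that separate its vertices into two different pairings must intersect inside the tetrahedron. -/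
theorem exists_zero_aux {C : Set (Fin 3 → ℝ)} (hC : Convex ℝ C)
    (g : (Fin 3 → ℝ) →ᵃ[ℝ] ℝ) (a b : Fin 3 → ℝ) (ha : a ∈ C) (hb : b ∈ C)
    (h1 : g a < 0) (h2 : 0 < g b) :
    ∃ t : ℝ, 0 ≤ t ∧ t ≤ 1 ∧ AffineMap.lineMap a b t ∈ C ∧
      ∀ f : (Fin 3 → ℝ) →ᵃ[ℝ] ℝ, f (AffineMap.lineMap a b t) = (1 - t) * f a + t * f b ∧
      g (AffineMap.lineMap a b t) = 0 := by
  have hd : 0 < g b - g a := by linarith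
  have h0 : 0 ≤ -g a / (g b - g a) := div_nonneg (by linarith) hd.le
  have h1' : -g a / (g b - g a) ≤ 1 := by rw [div_le_one hd]; linarith
  refine ⟨-g a / (g b - g a), h0, h1', hC.lineMap_mem ha hb ⟨h0, h1'⟩, fun f => ⟨?_, ?_⟩⟩
  · rw [AffineMap.apply_lineMap, AffineMap.lineMap_apply_module]; simp
  · rw [AffineMap.apply_lineMap, AffineMap.lineMap_apply_module]
    simp only [smul_eq_mul]
    field_simp
    ring

/-- Two flat cross-sections of a tetrahedron that separate its four vertices into
two different pairings must intersect inside the tetrahedron: if `f` separates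
`{v₀,v₁}` from `{v₂,v₃}` and `g` separates `{v₀,v₂}` from `{v₁,v₃}` (by signs),
then the zero sets of `f` and `g` meet in the convex hull of the vertices. -/
theorem quadrilaterals_of_distinct_types_intersect
    (v : Fin 4 → (Fin 3 → ℝ)) (hv : AffineIndependent ℝ v)
    (f g : (Fin 3 → ℝ) →ᵃ[ℝ] ℝ)
    (hf0 : f (v 0) < 0) (hf1 : f (v 1) < 0) (hf2 : 0 < f (v 2)) (hf3 : 0 < f (v 3))
    (hg0 : g (v 0) < 0) (hg2 : g (v 2) < 0) (hg1 : 0 < g (v 1)) (hg3 : 0 < g (v 3)) :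
    ∃ x ∈ convexHull ℝ (Set.range v), f x = 0 ∧ g x = 0 := by
  have hC := convex_convexHull ℝ (Set.range v)
  have hm : ∀ i, v i ∈ convexHull ℝ (Set.range v) := fun i => subset_convexHull ℝ _ ⟨i, rfl⟩
  obtain ⟨s, s0, s1, hs, hsf⟩ := exists_zero_aux hC g _ _ (hm 0) (hm 1) hg0 hg1
  obtain ⟨t, t0, t1, ht, htf⟩ := exists_zero_aux hC g _ _ (hm 2) (hm 3) hg2 hg3
  obtain ⟨r, r0, r1, hr, hrf⟩ := exists_zero_aux hC f _ _ hs ht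
    (by rw [(hsf f).1]; rcases s0.eq_or_lt with h | h
        · subst h; linarith
        · nlinarith [mul_neg_of_pos_of_neg h hf1])
    (by rw [(htf f).1]; rcases t0.eq_or_lt with h | h
        · subst h; linarith
        · nlinarith [mul_pos h hf3])
  exact ⟨_, hr, (hrf f).2, by rw [(hrf g).1, (hsf g).2, (htf g).2]; simp⟩
end
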